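/- arXiv:2403.02986 — 2 statements merged into one kernel-verified Lean document; each statement's English description precedes it below -/
import Mathlib

section
/- Let α ∈ S_n be a quasi-diagram. Then gαg^{−1} is regular for every g ∈ D_n if and only if α is rotatably regular. Consequently, if α is rotatably regular then gαg^{−1} is rotatably regular for every g ∈ D_n (the conjugation action of D_n restricts to the set of rotatably regular quasi-diagrams). -/
/-- `β` is regular with respect to the distinguished point `p` (the point "1"): every orbit of
`ζβ` contains `p` or an isolated point of `β`. -/
def RegularAt {n : ℕ} (β : Equiv.Perm (Fin n)) (p : Fin n) : Prop :=
  ∀ x : Fin n, ∃ y : Fin n, (finRotate n * β).SameCycle x y ∧ (y = p ∨ β y = y)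

/-- `β` is rotatably regular: every rotation `ζ^l β ζ^(-l)` (`l ∈ ℤ`) is regular. -/
def RotatablyRegularAt {n : ℕ} (β : Equiv.Perm (Fin n)) (p : Fin n) : Prop :=
  ∀ l : ℤ, RegularAt (finRotate n ^ l * β * finRotate n ^ (-l)) p

/-!
Conjugation by `g` carries the orbits of `ζβ` to those of `(gζg⁻¹)(gβg⁻¹)` and the fixed points of
`β` to those of `gβg⁻¹`, so it only moves the distinguished point from `q` to `g q`. Since rotations
commute with `ζ` and act transitively, rotatable regularity of `β` means regularity at every point.
A reflection turns `ζ` into `ζ⁻¹`, but `ζ⁻¹α⁻¹ = α(ζα)⁻¹α⁻¹`, so for an involution `α`, replacing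
`ζ` by `ζ⁻¹` moves the distinguished point from `q` to `α q`. Hence regularity at every point is
invariant under conjugation by the dihedral group.
-/

section Group

variable {G : Type*} [Group G] {a b g : G}

theorem semiconjBy_self_or_inv_of_mem_closure (hb : SemiconjBy b a a⁻¹)
    (hg : g ∈ Subgroup.closure {a, b}) : SemiconjBy g a a ∨ SemiconjBy g a a⁻¹ := by
  induction hg using Subgroup.closure_induction with
  | mem x hx =>
    rcases hx with rfl | rfl
    · exact .inl (Commute.refl x)
    · exact .inr hb
  | one => exact .inl (SemiconjBy.one_left a)
  | mul x y _ _ hx hy =>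
    rcases hx with hx | hx <;> rcases hy with hy | hy
    · exact .inl (hx.mul_left hy)
    · exact .inr (hx.inv_right.mul_left hy)
    · exact .inr (hx.mul_left hy)
    · exact .inl (by simpa only [inv_inv] using hx.inv_right.mul_left hy)
  | inv x _ hx =>
    rcases hx with hx | hx
    · exact .inl hx.inv_symm_left
    · exact .inr (by simpa only [inv_inv] using hx.inv_symm_left.inv_right)

end Group

theorem isCycleOn_finRotate_univ (n : ℕ) : (finRotate n).IsCycleOn Set.univ := by
  refine ⟨(finRotate n).bijective.bijOn_univ, fun p _ q _ => ?_⟩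
  have := p.neZero
  refine ⟨((q - p : Fin n) : ℕ), ?_⟩
  rw [zpow_natCast, Equiv.Perm.coe_pow, ← finCycle_eq_finRotate_iterate, finCycle_apply]
  simp

theorem semiconjBy_revPerm_finRotate_inv (n : ℕ) :
    SemiconjBy Fin.revPerm (finRotate n) (finRotate n)⁻¹ := by
  ext x : 1
  have := x.neZero
  simp [Fin.rev_add, finRotate_apply, finRotate_symm_apply]

section Regular

variable {X : Type*}

/-- Regularity of `β` at the distinguished point `p` relative to an arbitrary permutation `ζ` in
place of the `n`-cycle: every orbit of `ζβ` contains `p` or a fixed point of `β`. Here `ζ` is a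
parameter so that it can be conjugated and inverted. -/
def RegularWith (ζ β : Equiv.Perm X) (p : X) : Prop :=
  ∀ x : X, ∃ y : X, (ζ * β).SameCycle x y ∧ (y = p ∨ β y = y)

/-- Rotatable regularity of `β` at `p` relative to an arbitrary permutation `ζ`: all conjugates of
`β` by integer powers of `ζ` are regular at `p`. -/
def RotatablyRegularWith (ζ β : Equiv.Perm X) (p : X) : Prop :=
  ∀ l : ℤ, RegularWith ζ (ζ ^ l * β * ζ ^ (-l)) p

variable {ζ γ α β g : Equiv.Perm X} {p q : X}

theorem regularWith_conj_iff :
    RegularWith (g * ζ * g⁻¹) (g * β * g⁻¹) (g q) ↔ RegularWith ζ β q := by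
  have mul_conj : g * ζ * g⁻¹ * (g * β * g⁻¹) = g * (ζ * β) * g⁻¹ := by group
  unfold RegularWith
  rw [← g.forall_congr_right]
  refine forall_congr' fun x => ?_
  rw [← g.exists_congr_right]
  simp [mul_conj, Equiv.Perm.sameCycle_conj]

theorem regularWith_conj_iff_of_semiconjBy {ζ' : Equiv.Perm X} (h : SemiconjBy g ζ ζ') :
    RegularWith ζ' (g * β * g⁻¹) (g q) ↔ RegularWith ζ β q := by
  rw [← regularWith_conj_iff (g := g) (ζ := ζ), h.eq, mul_inv_cancel_right]

theorem regularWith_inv_inv_iff : RegularWith ζ⁻¹ β⁻¹ (β q) ↔ RegularWith ζ β q := by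
  have mul_eq_inv : β⁻¹ * ζ⁻¹ * β * β⁻¹ = (ζ * β)⁻¹ := by group
  calc RegularWith ζ⁻¹ β⁻¹ (β q)
    _ ↔ RegularWith (β⁻¹ * ζ⁻¹ * β) β⁻¹ q := by
      simpa only [mul_assoc, mul_inv_cancel_left, mul_inv_cancel, mul_one, one_mul] using
        regularWith_conj_iff (g := β) (ζ := β⁻¹ * ζ⁻¹ * β) (β := β⁻¹) (q := q)
    _ ↔ RegularWith ζ β q := by
      simp only [RegularWith, mul_eq_inv, Equiv.Perm.sameCycle_inv, Equiv.Perm.inv_eq_iff_eq,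
        eq_comm (b := β _)]

theorem forall_regularWith_inv_iff (hα : Function.Involutive α) :
    (∀ q, RegularWith ζ⁻¹ α q) ↔ ∀ q, RegularWith ζ α q := by
  have inv_self : α⁻¹ = α := inv_eq_of_mul_eq_one_left (Equiv.ext hα)
  rw [← α.forall_congr_right]
  exact forall_congr' fun q => by
    simpa only [inv_self] using regularWith_inv_inv_iff (ζ := ζ) (β := α) (q := q)

theorem forall_regularWith_conj_iff (hg : SemiconjBy g ζ ζ ∨ SemiconjBy g ζ ζ⁻¹)
    (hα : Function.Involutive α) :
    (∀ q, RegularWith ζ (g * α * g⁻¹) q) ↔ ∀ q, RegularWith ζ α q := by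
  rw [← g.forall_congr_right]
  rcases hg with hg | hg
  · exact forall_congr' fun q => regularWith_conj_iff_of_semiconjBy hg
  · have hg' : SemiconjBy g ζ⁻¹ ζ := by simpa only [inv_inv] using hg.inv_right
    exact (forall_congr' fun q => regularWith_conj_iff_of_semiconjBy hg').trans
      (forall_regularWith_inv_iff hα)

theorem rotatablyRegularWith_iff_forall (hζ : ζ.IsCycleOn Set.univ) :
    RotatablyRegularWith ζ β p ↔ ∀ q, RegularWith ζ β q := by
  have regularWith_rotate (l : ℤ) (q : X) :
      RegularWith ζ (ζ ^ l * β * ζ ^ (-l)) ((ζ ^ l) q) ↔ RegularWith ζ β q := by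
    simpa only [zpow_neg] using
      regularWith_conj_iff_of_semiconjBy (Commute.zpow_self ζ l).semiconjBy
  constructor
  · intro h q
    obtain ⟨l, rfl⟩ := hζ.2 (Set.mem_univ q) (Set.mem_univ p)
    exact (regularWith_rotate l q).1 (h l)
  · intro h l
    obtain ⟨q, rfl⟩ := (ζ ^ l).surjective p
    exact (regularWith_rotate l q).2 (h q)

theorem stmt_7_general (hζ : ζ.IsCycleOn Set.univ) (hγ : SemiconjBy γ ζ ζ⁻¹)
    (hα : Function.Involutive α) (p : X) :
    ((∀ g ∈ Subgroup.closure {ζ, γ}, RegularWith ζ (g * α * g⁻¹) p) ↔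
      RotatablyRegularWith ζ α p) ∧
    (RotatablyRegularWith ζ α p →
      ∀ g ∈ Subgroup.closure {ζ, γ}, RotatablyRegularWith ζ (g * α * g⁻¹) p) := by
  have forall_regularWith_of_mem (h : RotatablyRegularWith ζ α p)
      {g : Equiv.Perm X} (hg : g ∈ Subgroup.closure {ζ, γ}) :
      ∀ q, RegularWith ζ (g * α * g⁻¹) q :=
    (forall_regularWith_conj_iff (semiconjBy_self_or_inv_of_mem_closure hγ hg) hα).2
      ((rotatablyRegularWith_iff_forall hζ).1 h)
  refine ⟨⟨fun h l => ?_, fun h g hg => forall_regularWith_of_mem h hg p⟩,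
    fun h g hg => (rotatablyRegularWith_iff_forall hζ).2 (forall_regularWith_of_mem h hg)⟩
  have rotation_mem : ζ ^ l ∈ Subgroup.closure {ζ, γ} :=
    zpow_mem (Subgroup.mem_closure_of_mem (Set.mem_insert ζ {γ})) l
  simpa only [zpow_neg] using h (ζ ^ l) rotation_mem

end Regular

/-- Let `α ∈ S_n` be a quasi-diagram (involution of `Fin n`, 0-indexed:
point `1` is `⟨0, _⟩`; `ζ = finRotate n`; `γ = Fin.revPerm` is the reflection `i ↦ n+1-i`,
and `D_n` is the dihedral subgroup of `S_n` generated by `ζ` and `γ`).  Then `gαg⁻¹` is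
regular for every `g ∈ D_n` iff `α` is rotatably regular.  Consequently, if `α` is rotatably
regular then `gαg⁻¹` is rotatably regular for every `g ∈ D_n`. -/
theorem stmt_7 (n : ℕ) (hn : 0 < n) (α : Equiv.Perm (Fin n))
    (hα : ∀ i, α (α i) = i) :
    ((∀ g ∈ Subgroup.closure {finRotate n, Fin.revPerm},
        RegularAt (g * α * g⁻¹) ⟨0, hn⟩) ↔
      RotatablyRegularAt α ⟨0, hn⟩) ∧
    (RotatablyRegularAt α ⟨0, hn⟩ →
      ∀ g ∈ Subgroup.closure {finRotate n, Fin.revPerm},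
        RotatablyRegularAt (g * α * g⁻¹) ⟨0, hn⟩) :=
  stmt_7_general (isCycleOn_finRotate_univ n) (semiconjBy_revPerm_finRotate_inv n) hα ⟨0, hn⟩
end

section
/- Let α ∈ S_n be a maximal quasi-diagram. Then for every i ∈ {1,…,n+1}, the i-expansion ι_i(α) ∈ S_{n+1} is a maximal quasi-diagram, i.e. ζ_{n+1}·ι_i(α) has exactly one orbit on {1,…,n+1}. -/
/-- The cycle `ϑ_{i,n+1} = (i, i+1, …, n+1)` of `S_{n+1}`; 0-indexed on `Fin (n+1)` it is the
cycle `(a, a+1, …, Fin.last n)` where `a` corresponds to `i`. -/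
def vartheta {n : ℕ} (a : Fin (n + 1)) : Equiv.Perm (Fin (n + 1)) :=
  Fin.revPerm * (Fin.cycleRange a.rev)⁻¹ * Fin.revPerm

/-- A permutation of `Fin n` regarded as a permutation of `Fin (n+1)` fixing the last point. -/
def castPerm {n : ℕ} (α : Equiv.Perm (Fin n)) : Equiv.Perm (Fin (n + 1)) :=
  α.viaFintypeEmbedding Fin.castSuccEmb

/-- The `i`-expansion `ι_i(α) = ϑ_{i,n+1} α ϑ_{i,n+1}⁻¹` of a quasi-diagram `α ∈ S_n`. -/
def expand {n : ℕ} (a : Fin (n + 1)) (α : Equiv.Perm (Fin n)) : Equiv.Perm (Fin (n + 1)) :=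
  vartheta a * castPerm α * (vartheta a)⁻¹

/-! The expansion `ι_a` relabels the points by the increasing map that skips `a` and makes `a` a
fixed point; in particular it is multiplicative. The long cycles are related by
`ζ_{n+1} = (a, ζ_{n+1}(a)) · ι_a(ζ_n)`, so `ζ_{n+1} · ι_a(α) = (a, ζ_{n+1}(a)) · ι_a(ζ_n α)`.
Multiplying by that transposition inserts the fixed point `a` into the only other orbit. -/

open Equiv Equiv.Perm

section SameCycle

variable {X Y : Type*}

theorem sameCycle_map_of_forall_sameCycle_apply {σ : Perm X} {τ : Perm Y} {f : X → Y}
    (hf : ∀ x, τ.SameCycle (f x) (f (σ x))) {x y : X} (hxy : σ.SameCycle x y) :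
    τ.SameCycle (f x) (f y) := by
  obtain ⟨k, rfl⟩ := hxy
  induction k with
  | zero => exact .refl _ _
  | succ k ih =>
    rw [add_comm, zpow_one_add, mul_apply]
    exact ih.trans (hf _)
  | pred k ih =>
    have hback := hf ((σ ^ (-(k : ℤ) - 1)) x)
    rw [← mul_apply, ← zpow_one_add, add_sub_cancel] at hback
    exact ih.trans hback.symm

variable [DecidableEq X] {σ : Perm X} {a b : X}

theorem sameCycle_swap_mul_apply_of_fixed (ha : σ a = a) (x : X) :
    (swap a b * σ).SameCycle x (σ x) := by
  by_cases hxa : x = a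
  · rw [hxa, ha]
  have hσx : σ x ≠ a := fun h => hxa (σ.injective (h.trans ha.symm))
  by_cases hσb : σ x = b
  · have htwo : (swap a b * σ) ((swap a b * σ) x) = σ x := by
      simp only [mul_apply, hσb, swap_apply_right, ha, swap_apply_left]
    rw [← htwo, sameCycle_apply_right, sameCycle_apply_right]
  · have hone : (swap a b * σ) x = σ x := swap_apply_of_ne_of_ne hσx hσb
    rw [← hone, sameCycle_apply_right]

theorem sameCycle_swap_mul_of_fixed (ha : σ a = a) {x y : X} (hxy : σ.SameCycle x y) :
    (swap a b * σ).SameCycle x y :=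
  sameCycle_map_of_forall_sameCycle_apply (f := id) (sameCycle_swap_mul_apply_of_fixed ha) hxy

theorem forall_sameCycle_swap_mul_of_fixed (ha : σ a = a) (hba : b ≠ a)
    (hσ : ∀ x y, x ≠ a → y ≠ a → σ.SameCycle x y) (x y : X) :
    (swap a b * σ).SameCycle x y := by
  have hab : (swap a b * σ).SameCycle a b :=
    ⟨1, by rw [zpow_one, mul_apply, ha, swap_apply_left]⟩
  have hbase : ∀ z, (swap a b * σ).SameCycle z b := fun z => by
    obtain rfl | hza := eq_or_ne z a
    · exact hab
    · exact sameCycle_swap_mul_of_fixed ha (hσ z b hza hba)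
  exact (hbase x).trans (hbase y).symm

end SameCycle

section Expansion

variable {n : ℕ} (a : Fin (n + 1)) (α β : Perm (Fin n)) (x : Fin n)

theorem vartheta_last : vartheta a (Fin.last n) = a := by
  simp [vartheta, Perm.inv_def]

theorem vartheta_castSucc : vartheta a x.castSucc = a.succAbove x := by
  simp [vartheta, Perm.inv_def, Fin.rev_castSucc, Fin.rev_succAbove]

theorem castPerm_last : castPerm α (Fin.last n) = Fin.last n :=
  viaFintypeEmbedding_apply_notMem_range _ _ (by simp)

theorem castPerm_castSucc : castPerm α x.castSucc = (α x).castSucc :=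
  viaFintypeEmbedding_apply_image α Fin.castSuccEmb x

theorem expand_self : expand a α a = a := by
  have hinv : (vartheta a)⁻¹ a = Fin.last n := by rw [inv_eq_iff_eq, vartheta_last]
  simp only [expand, mul_apply, hinv, castPerm_last, vartheta_last]

theorem expand_succAbove : expand a α (a.succAbove x) = a.succAbove (α x) := by
  have hinv : (vartheta a)⁻¹ (a.succAbove x) = x.castSucc := by
    rw [inv_eq_iff_eq, vartheta_castSucc]
  simp only [expand, mul_apply, hinv, castPerm_castSucc, vartheta_castSucc]

theorem expand_mul : expand a (α * β) = expand a α * expand a β := by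
  ext z : 1
  obtain rfl | ⟨y, rfl⟩ := Fin.eq_self_or_eq_succAbove a z
  · simp only [mul_apply, expand_self]
  · simp only [mul_apply, expand_succAbove]

variable {α} in
theorem sameCycle_expand_of_ne (hα : ∀ x y, α.SameCycle x y) {x y : Fin (n + 1)}
    (hx : x ≠ a) (hy : y ≠ a) : (expand a α).SameCycle x y := by
  obtain ⟨x, rfl⟩ := Fin.exists_succAbove_eq hx
  obtain ⟨y, rfl⟩ := Fin.exists_succAbove_eq hy
  refine sameCycle_map_of_forall_sameCycle_apply (fun z => ?_) (hα x y)
  rw [← expand_succAbove, sameCycle_apply_right]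

end Expansion

section Rotation

variable {n : ℕ} (a : Fin (n + 1))

theorem val_succAbove (x : Fin n) :
    (a.succAbove x).val = if x.val < a.val then x.val else x.val + 1 := by
  simp only [Fin.succAbove, Fin.lt_def, Fin.val_castSucc]
  split_ifs <;> rfl

-- `finRotate n` is the first-return map of `finRotate (n + 1)` to the complement of `a`.
theorem finRotate_succAbove_cases (x : Fin n) :
    finRotate (n + 1) (a.succAbove x) = a.succAbove (finRotate n x) ∨
      finRotate (n + 1) (a.succAbove x) = a ∧
        finRotate (n + 1) a = a.succAbove (finRotate n x) := by
  obtain _ | n := n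
  · exact x.elim0
  simp only [Fin.ext_iff, coe_finRotate, Fin.val_last, val_succAbove]
  split_ifs <;> omega

theorem finRotate_succ_eq_swap_mul_expand :
    finRotate (n + 1) = swap a (finRotate (n + 1) a) * expand a (finRotate n) := by
  ext z : 1
  rw [mul_apply]
  obtain rfl | ⟨x, rfl⟩ := Fin.eq_self_or_eq_succAbove a z
  · rw [expand_self, swap_apply_left]
  rw [expand_succAbove]
  obtain hskip | ⟨hin, hout⟩ := finRotate_succAbove_cases a x
  · rw [← hskip, swap_apply_of_ne_of_ne]
    · exact hskip ▸ Fin.succAbove_ne a _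
    · exact (finRotate (n + 1)).injective.ne (Fin.succAbove_ne a x)
  · rw [← hout, swap_apply_right, hin]

theorem finRotate_apply_ne_self (a : Fin (n + 2)) : finRotate (n + 2) a ≠ a :=
  mem_support.1 (support_finRotate ▸ Finset.mem_univ a)

end Rotation

theorem stmt_11_general {n : ℕ} (α : Perm (Fin n))
    (hmax : ∀ x y : Fin n, (finRotate n * α).SameCycle x y) (a x y : Fin (n + 1)) :
    (finRotate (n + 1) * expand a α).SameCycle x y := by
  obtain _ | n := n
  · exact (Subsingleton.elim (α := Fin 1) x y).sameCycle _
  rw [finRotate_succ_eq_swap_mul_expand a, mul_assoc, ← expand_mul]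
  exact forall_sameCycle_swap_mul_of_fixed (expand_self a _) (finRotate_apply_ne_self a)
    (fun _ _ => sameCycle_expand_of_ne a hmax) x y

/-- Let `α ∈ S_n` be a maximal quasi-diagram (an involution of `Fin n` such
that `ζ_n α` has exactly one orbit).  Then for every `i ∈ {1,…,n+1}` (i.e. `a : Fin (n+1)`),
the `i`-expansion `ι_i(α) ∈ S_{n+1}` is maximal: `ζ_{n+1} ι_i(α)` has exactly one orbit. -/
theorem stmt_11 (n : ℕ) (hn : 0 < n) (α : Equiv.Perm (Fin n))
    (hα : ∀ x, α (α x) = x)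
    (hmax : ∀ x y : Fin n, (finRotate n * α).SameCycle x y) :
    ∀ a : Fin (n + 1), ∀ x y : Fin (n + 1),
      (finRotate (n + 1) * expand a α).SameCycle x y :=
  stmt_11_general α hmax
end
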